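/- Let X be a KU-algebra and d : X → X a self map. If (μᵢ)_{i ∈ I} is a family of fuzzy right derivations KU-ideals of X with respect to d, then their pointwise infimum ⋂ᵢ μᵢ, defined by (⋂ᵢ μᵢ)(x) = infᵢ μᵢ(x), is also a fuzzy right derivations KU-ideal of X with respect to d. -/

import Mathlib

/-- A KU-algebra: a set `X` with a binary operation `⋆` and a constant `𝟎` satisfying
(KU1) `(x⋆y)⋆((y⋆z)⋆(x⋆z)) = 𝟎`, (KU2) `x⋆𝟎 = 𝟎`, (KU3) `𝟎⋆x = x`,
(KU4) `x⋆y = 𝟎` and `y⋆x = 𝟎` imply `x = y`. -/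
class KUAlgebra (X : Type*) where
  star : X → X → X
  zero : X
  ku1 : ∀ x y z : X, star (star x y) (star (star y z) (star x z)) = zero
  ku2 : ∀ x : X, star x zero = zero
  ku3 : ∀ x : X, star zero x = x
  ku4 : ∀ x y : X, star x y = zero → star y x = zero → x = y

infixl:70 " ⋆ " => KUAlgebra.star
notation "𝟎" => KUAlgebra.zero

/-- The order `x ≤ y ↔ y ⋆ x = 𝟎` on a KU-algebra. -/
def KUle {X : Type*} [KUAlgebra X] (x y : X) : Prop := y ⋆ x = 𝟎

/-- `x ∧ y := (x ⋆ y) ⋆ y` in a KU-algebra. -/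
def KUwedge {X : Type*} [KUAlgebra X] (x y : X) : X := (x ⋆ y) ⋆ y

/-- An (ℓ,r)-derivation: `d(x⋆y) = (d(x)⋆y) ∧ (x⋆d(y))`. -/
def IsLRDeriv {X : Type*} [KUAlgebra X] (d : X → X) : Prop :=
  ∀ x y : X, d (x ⋆ y) = KUwedge (d x ⋆ y) (x ⋆ d y)

/-- An (r,ℓ)-derivation: `d(x⋆y) = (x⋆d(y)) ∧ (d(x)⋆y)`. -/
def IsRLDeriv {X : Type*} [KUAlgebra X] (d : X → X) : Prop :=
  ∀ x y : X, d (x ⋆ y) = KUwedge (x ⋆ d y) (d x ⋆ y)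

/-- A derivation is both an (ℓ,r)- and an (r,ℓ)-derivation. -/
def IsDeriv {X : Type*} [KUAlgebra X] (d : X → X) : Prop := IsLRDeriv d ∧ IsRLDeriv d

/-- A fuzzy left derivations KU-ideal of `X` with respect to a self map `d`:
a fuzzy set `μ : X → [0,1]` with `μ 𝟎 ≥ μ x` and
`μ (d (x ⋆ z)) ≥ min (μ (d x ⋆ (y ⋆ z))) (μ (d y))`. -/
def IsFuzzyLeftDerivKUIdeal {X : Type*} [KUAlgebra X] (d : X → X) (μ : X → ℝ) : Prop :=
  (∀ x : X, μ x ∈ Set.Icc (0 : ℝ) 1) ∧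
  (∀ x : X, μ 𝟎 ≥ μ x) ∧
  (∀ x y z : X, μ (d (x ⋆ z)) ≥ min (μ (d x ⋆ (y ⋆ z))) (μ (d y)))

/-- A fuzzy right derivations KU-ideal of `X` with respect to a self map `d`:
a fuzzy set `μ : X → [0,1]` with `μ 𝟎 ≥ μ x` and
`μ (d (x ⋆ z)) ≥ min (μ (x ⋆ d (y ⋆ z))) (μ (d y))`. -/
def IsFuzzyRightDerivKUIdeal {X : Type*} [KUAlgebra X] (d : X → X) (μ : X → ℝ) : Prop :=
  (∀ x : X, μ x ∈ Set.Icc (0 : ℝ) 1) ∧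
  (∀ x : X, μ 𝟎 ≥ μ x) ∧
  (∀ x y z : X, μ (d (x ⋆ z)) ≥ min (μ (x ⋆ d (y ⋆ z))) (μ (d y)))

/-- The pointwise infimum of a family of fuzzy right derivations KU-ideals with respect
to a self map `d` is again a fuzzy right derivations KU-ideal with respect to `d`. -/
theorem iInf_fuzzy_right_deriv_ideal {X : Type*} [KUAlgebra X] (d : X → X)
    {I : Type*} (μ : I → X → ℝ)
    (h : ∀ i : I, IsFuzzyRightDerivKUIdeal d (μ i)) :
    IsFuzzyRightDerivKUIdeal d (fun x => ⨅ i : I, μ i x) := by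
  -- The empty index set is separate: there the real infimum takes the junk value `0`.
  rcases isEmpty_or_nonempty I with hI | hI
  · simp [IsFuzzyRightDerivKUIdeal, Real.iInf_of_isEmpty]
  · have hb : ∀ x, BddBelow (Set.range fun i => μ i x) := fun x =>
      ⟨0, by rintro _ ⟨i, rfl⟩; exact ((h i).1 x).1⟩
    refine ⟨fun x => ⟨le_ciInf fun i => ((h i).1 x).1, ?_⟩, fun x => ?_, fun x y z => ?_⟩
    · exact (ciInf_le (hb x) (Classical.arbitrary I)).trans ((h _).1 x).2
    · exact ciInf_mono (hb x) fun i => (h i).2.1 x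
    · exact le_ciInf fun i =>
        (min_le_min (ciInf_le (hb _) i) (ciInf_le (hb _) i)).trans ((h i).2.2 x y z)
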